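/- arXiv:0803.3377 — 6 statements merged into one kernel-verified Lean document; each statement's English description precedes it below -/
import Mathlib

section
/- Let K ⊂ ℝ³ be a compact set and let A ≥ B ≥ 0 be real numbers. Let u, φ : ℝ³ → ℝ be functions which are continuous on the closure of ℝ³ \ K and twice continuously differentiable on the open set ℝ³ \ K, with u(x) ≥ 0 and φ(x) ≥ 0 for all x ∈ ℝ³ \ K. Assume that Δu(x) ≥ A u(x) and Δφ(x) ≤ B φ(x) for all x in ℝ³ \ K, that u(x) ≤ φ(x) for all x on the boundary ∂K, and that u(x) → 0 and φ(x) → 0 as |x| → ∞. Then u(x) ≤ φ(x) for all x ∈ ℝ³ \ K. -/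
open MeasureTheory Filter Set

/-- The Laplacian `Δf = ∑_{j=1}^{3} ∂²f/∂x_j²` of a function on `ℝ³`. -/
noncomputable def laplacian (f : EuclideanSpace ℝ (Fin 3) → ℝ)
    (x : EuclideanSpace ℝ (Fin 3)) : ℝ :=
  ∑ i : Fin 3,
    fderiv ℝ (fun y => fderiv ℝ f y (EuclideanSpace.single i 1)) x (EuclideanSpace.single i 1)

theorem dd_nonpos_of_isLocalMax {E : Type*} [NormedAddCommGroup E] [NormedSpace ℝ E]
    {g : E → ℝ} {x : E} (hg : ContDiffAt ℝ 2 g x) (hm : IsLocalMax g x) (e : E) :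
    fderiv ℝ (fun y => fderiv ℝ g y e) x e ≤ 0 := by
  by_contra! hpos
  set L : ℝ → E := fun t => x + t • e with hL
  have hL0 : L 0 = x := by simp [hL]
  have hLd : ∀ t, HasDerivAt L e t := fun t => by
    have := ((hasDerivAt_id t).smul_const e).const_add x
    simpa [hL] using this
  have hLc : ContinuousAt L 0 := (hLd 0).continuousAt
  have hLt : Tendsto L (nhds 0) (nhds x) := by
    have := hLc.tendsto; rwa [hL0] at this
  have hev : ∀ᶠ y in nhds x, DifferentiableAt ℝ g y := by
    filter_upwards [hg.eventually (by simp)] with y hy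
    exact hy.differentiableAt (by simp)
  have h1 : deriv (fun t => g (L t)) =ᶠ[nhds 0] fun t => fderiv ℝ g (L t) e := by
    filter_upwards [hLt.eventually hev] with t ht
    exact (ht.hasFDerivAt.comp_hasDerivAt t (hLd t)).deriv
  have hdiff : DifferentiableAt ℝ (fun y => fderiv ℝ g y e) x := by
    have : DifferentiableAt ℝ (fderiv ℝ g) x :=
      (hg.fderiv_right (m := 1) (by norm_num)).differentiableAt (by simp)
    exact this.clm_apply (differentiableAt_const e)
  have h2 : deriv (deriv (fun t => g (L t))) 0 = fderiv ℝ (fun y => fderiv ℝ g y e) x e := by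
    rw [h1.deriv_eq]
    have hd : HasFDerivAt (fun y => fderiv ℝ g y e) (fderiv ℝ (fun y => fderiv ℝ g y e) x) (L 0) := by
      rw [hL0]; exact hdiff.hasFDerivAt
    exact (hd.comp_hasDerivAt 0 (hLd 0)).deriv
  have hmax : IsLocalMax (fun t => g (L t)) 0 := by
    have := hLt.eventually hm
    show ∀ᶠ t in nhds 0, g (L t) ≤ g (L 0)
    rw [hL0]; exact this
  have hc : ContinuousAt (fun t => g (L t)) 0 := by
    have : ContinuousAt g (L 0) := by rw [hL0]; exact hg.continuousAt
    exact this.comp hLc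
  have hmin := isLocalMin_of_deriv_deriv_pos (f := fun t => g (L t)) (x₀ := 0)
    (by rw [h2]; exact hpos) hmax.deriv_eq_zero hc
  have hconst : (fun t => g (L t)) =ᶠ[nhds 0] fun _ => g (L 0) := by
    filter_upwards [hmax, hmin] with t h1 h2
    exact le_antisymm h1 h2
  have h3 : deriv (deriv (fun t => g (L t))) 0 = 0 := by
    rw [hconst.deriv.deriv_eq]; simp
  linarith

theorem laplacian_pert {u φ : EuclideanSpace ℝ (Fin 3) → ℝ} {x : EuclideanSpace ℝ (Fin 3)}
    (hu : ContDiffAt ℝ 2 u x) (hφ : ContDiffAt ℝ 2 φ x) (ε : ℝ) :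
    laplacian (fun y => u y - φ y + ε * ‖y‖ ^ 2) x = laplacian u x - laplacian φ x + 6 * ε := by
  have key : ∀ i : Fin 3,
      fderiv ℝ (fun y => fderiv ℝ (fun y => u y - φ y + ε * ‖y‖ ^ 2) y
        (EuclideanSpace.single i 1)) x (EuclideanSpace.single i 1) =
      fderiv ℝ (fun y => fderiv ℝ u y (EuclideanSpace.single i 1)) x (EuclideanSpace.single i 1)
      - fderiv ℝ (fun y => fderiv ℝ φ y (EuclideanSpace.single i 1)) x (EuclideanSpace.single i 1)
      + 2 * ε := by
    intro i
    set e : EuclideanSpace ℝ (Fin 3) := EuclideanSpace.single i 1 with he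
    have hd : ∀ {f : EuclideanSpace ℝ (Fin 3) → ℝ}, ContDiffAt ℝ 2 f x →
        HasFDerivAt (fun y => fderiv ℝ f y e) (fderiv ℝ (fun y => fderiv ℝ f y e) x) x := by
      intro f hf
      have : DifferentiableAt ℝ (fderiv ℝ f) x :=
        (hf.fderiv_right (m := 1) (by norm_num)).differentiableAt (by simp)
      exact (this.clm_apply (differentiableAt_const e)).hasFDerivAt
    have h1 : (fun y => fderiv ℝ (fun y => u y - φ y + ε * ‖y‖ ^ 2) y e) =ᶠ[nhds x]
        fun y => fderiv ℝ u y e - fderiv ℝ φ y e + ε * (2 * innerSL ℝ e y) := by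
      filter_upwards [hu.eventually (by simp), hφ.eventually (by simp)] with y h1 h2
      have a1 := (h1.differentiableAt (by simp)).hasFDerivAt
      have a2 := (h2.differentiableAt (by simp)).hasFDerivAt
      have a3 := (hasStrictFDerivAt_norm_sq y).hasFDerivAt.const_mul ε
      have := ((a1.sub a2).add a3).fderiv
      erw [this]
      simp [real_inner_comm]
    rw [h1.fderiv_eq]
    have a3 := (((innerSL ℝ e).hasFDerivAt (x := x)).const_mul 2).const_mul ε
    have := (((hd hu).sub (hd hφ)).add a3).fderiv
    erw [this]
    have hne : ‖e‖ = 1 := by simp [he]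
    simp [hne]
    ring
  unfold laplacian
  simp only [key, Fin.sum_univ_three]
  ring

/-- Deift–Simon comparison theorem.  Let `K ⊂ ℝ³` be compact, `A ≥ B ≥ 0`,
and let `u, φ ≥ 0` be continuous on the closure of `ℝ³ \ K`, `C²` on `ℝ³ \ K`, with
`Δu ≥ A u`, `Δφ ≤ B φ` on `ℝ³ \ K`, `u ≤ φ` on `∂K`, and `u, φ → 0` at infinity.
Then `u ≤ φ` on `ℝ³ \ K`. -/
theorem deift_simon_comparison
    (K : Set (EuclideanSpace ℝ (Fin 3))) (hK : IsCompact K)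
    (A B : ℝ) (hAB : B ≤ A) (hB : 0 ≤ B)
    (u φ : EuclideanSpace ℝ (Fin 3) → ℝ)
    (hu_cont : ContinuousOn u (closure Kᶜ)) (hφ_cont : ContinuousOn φ (closure Kᶜ))
    (hu_smooth : ContDiffOn ℝ 2 u Kᶜ) (hφ_smooth : ContDiffOn ℝ 2 φ Kᶜ)
    (hu_nonneg : ∀ x ∈ Kᶜ, 0 ≤ u x) (hφ_nonneg : ∀ x ∈ Kᶜ, 0 ≤ φ x)
    (hu_sub : ∀ x ∈ Kᶜ, A * u x ≤ laplacian u x)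
    (hφ_super : ∀ x ∈ Kᶜ, laplacian φ x ≤ B * φ x)
    (h_bd : ∀ x ∈ frontier K, u x ≤ φ x)
    (hu_decay : Tendsto u (cocompact (EuclideanSpace ℝ (Fin 3))) (nhds 0))
    (hφ_decay : Tendsto φ (cocompact (EuclideanSpace ℝ (Fin 3))) (nhds 0)) :
    ∀ x ∈ Kᶜ, u x ≤ φ x := by
  intro x₀ hx₀
  by_contra! hlt
  set δ := u x₀ - φ x₀ with hδ
  have hδ0 : 0 < δ := by linarith
  have hlim : Tendsto (fun x => u x - φ x) (cocompact (EuclideanSpace ℝ (Fin 3))) (nhds 0) := by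
    simpa using hu_decay.sub hφ_decay
  have hev := hlim.eventually (gt_mem_nhds (half_pos hδ0))
  obtain ⟨K', hK', hsub⟩ := mem_cocompact.1 hev
  obtain ⟨R, hR0, hR⟩ := hK'.isBounded.subset_ball_lt 0 0
  have hin : ∀ x, δ / 2 ≤ u x - φ x → x ∈ Metric.ball (0 : EuclideanSpace ℝ (Fin 3)) R := by
    intro x hx
    by_contra hn
    have : x ∈ K'ᶜ := fun h => hn (hR h)
    have := hsub this
    simp only [mem_setOf_eq] at this
    linarith
  set ε := δ / (4 * R ^ 2) with hε
  have hε0 : 0 < ε := by positivity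
  have hεR : ε * R ^ 2 = δ / 4 := by rw [hε]; field_simp
  set S := closure Kᶜ ∩ Metric.closedBall (0 : EuclideanSpace ℝ (Fin 3)) R with hS
  have hSc : IsCompact S := (isCompact_closedBall _ _).inter_left isClosed_closure
  have hx₀S : x₀ ∈ S :=
    ⟨subset_closure hx₀, Metric.ball_subset_closedBall (hin x₀ (by linarith))⟩
  have hgc : ContinuousOn (fun y => u y - φ y + ε * ‖y‖ ^ 2) S :=
    ((hu_cont.sub hφ_cont).mono inter_subset_left).add (by fun_prop)
  obtain ⟨x₁, hx₁, hmax⟩ := hSc.exists_isMaxOn ⟨x₀, hx₀S⟩ hgc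
  have hge := hmax hx₀S
  simp only [mem_setOf_eq] at hge
  have hn1 : ‖x₁‖ ≤ R := by simpa using hx₁.2
  have hn2 : ε * ‖x₁‖ ^ 2 ≤ ε * R ^ 2 := by gcongr
  have hn3 : 0 ≤ ε * ‖x₀‖ ^ 2 := by positivity
  have hw : δ / 2 < u x₁ - φ x₁ := by linarith
  have hxK : x₁ ∈ Kᶜ := by
    intro hk
    have : x₁ ∈ frontier K := by
      rw [frontier_eq_closure_inter_closure]
      exact ⟨subset_closure hk, hx₁.1⟩
    have := h_bd x₁ this
    linarith
  have hnhds : Kᶜ ∈ nhds x₁ := hK.isClosed.isOpen_compl.mem_nhds hxK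
  have hloc : IsLocalMax (fun y => u y - φ y + ε * ‖y‖ ^ 2) x₁ := by
    apply hmax.isLocalMax
    filter_upwards [hnhds, Metric.isOpen_ball.mem_nhds (hin x₁ hw.le)] with y h1 h2
    exact ⟨subset_closure h1, Metric.ball_subset_closedBall h2⟩
  have hu2 := hu_smooth.contDiffAt hnhds
  have hφ2 := hφ_smooth.contDiffAt hnhds
  have hg2 : ContDiffAt ℝ 2 (fun y => u y - φ y + ε * ‖y‖ ^ 2) x₁ :=
    (hu2.sub hφ2).add (contDiffAt_const.mul (contDiff_norm_sq ℝ).contDiffAt)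
  have hle : laplacian (fun y => u y - φ y + ε * ‖y‖ ^ 2) x₁ ≤ 0 :=
    Finset.sum_nonpos fun i _ => dd_nonpos_of_isLocalMax hg2 hloc _
  rw [laplacian_pert hu2 hφ2] at hle
  have b1 := hu_sub x₁ hxK
  have b2 := hφ_super x₁ hxK
  have b3 := mul_le_mul_of_nonneg_right hAB (hu_nonneg x₁ hxK)
  have b4 : 0 ≤ B * (u x₁ - φ x₁) := mul_nonneg hB (by linarith)
  linarith
end

section
/- Let R > 0 and A > 0. Let ψ : ℝ³ → ℝ be continuous and nonnegative, with ψ(x) → 0 as |x| → ∞, twice continuously differentiable on the open set {x ∈ ℝ³ : |x| > R}, and satisfying Δψ(x) ≥ A ψ(x) for all |x| > R. Then there exists a constant C_A > 0 such that ψ(x) ≤ C_A e^{-√A |x|} for all x with |x| ≥ R. -/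
open MeasureTheory Filter Set

lemma second_deriv_test {f f' : ℝ → ℝ} {c : ℝ} (hmax : IsLocalMax f 0)
    (hf : ∀ᶠ t in nhds (0:ℝ), HasDerivAt f (f' t) t) (hf' : HasDerivAt f' c 0) : c ≤ 0 := by
  by_contra hc
  push Not at hc
  have h1 : deriv f =ᶠ[nhds 0] f' := hf.mono fun t ht => ht.deriv
  have h2 : deriv (deriv f) 0 = c := by rw [h1.deriv_eq, hf'.deriv]
  have h3 : deriv f 0 = 0 := hmax.deriv_eq_zero
  have hmin := isLocalMin_of_deriv_deriv_pos (by rw [h2]; exact hc) h3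
    hf.self_of_nhds.continuousAt
  have h4 : f =ᶠ[nhds 0] fun _ => f 0 := by
    filter_upwards [hmax, hmin] with t a b using le_antisymm a b
  have h5 : deriv (deriv f) 0 = 0 := by
    rw [h4.deriv.deriv_eq]; simp
  linarith

lemma radial_second (k C r a : ℝ) (hr : 0 < r) :
    ∃ g' : ℝ → ℝ,
      (∀ᶠ t in nhds (0:ℝ), HasDerivAt
        (fun t => C * Real.exp (-k * Real.sqrt (r^2 + 2 * t * a + t^2))) (g' t) t) ∧
      HasDerivAt g' (C * Real.exp (-k * r) * (k^2 * a^2 / r^2 - k * (1 / r - a^2 / r^3))) 0 := by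
  have hq : ∀ t : ℝ, HasDerivAt (fun t => r^2 + 2 * t * a + t^2) (2 * a + 2 * t) t := by
    intro t
    have h := ((((hasDerivAt_id t).const_mul 2).mul_const a).const_add (r^2)).add
      ((hasDerivAt_id t).pow 2)
    refine (h.congr_deriv ?_)
    simp
  have hs : ∀ t : ℝ, r^2 + 2 * t * a + t^2 ≠ 0 → HasDerivAt
      (fun t => Real.sqrt (r^2 + 2 * t * a + t^2))
      ((a + t) / Real.sqrt (r^2 + 2 * t * a + t^2)) t := by
    intro t ht
    refine ((hq t).sqrt ht).congr_deriv ?_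
    rw [show 2 * a + 2 * t = 2 * (a + t) by ring, mul_div_mul_left _ _ two_ne_zero]
  have he : ∀ t : ℝ, r^2 + 2 * t * a + t^2 ≠ 0 → HasDerivAt
      (fun t => C * Real.exp (-k * Real.sqrt (r^2 + 2 * t * a + t^2)))
      (C * (Real.exp (-k * Real.sqrt (r^2 + 2 * t * a + t^2)) *
        (-k * ((a + t) / Real.sqrt (r^2 + 2 * t * a + t^2))))) t := fun t ht =>
    (((hs t ht).const_mul (-k)).exp).const_mul C
  have h0 : r^2 + 2 * (0:ℝ) * a + 0^2 ≠ 0 := by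
    have : 0 < r^2 := by positivity
    simp; exact hr.ne'
  have hs0 : Real.sqrt (r^2 + 2 * (0:ℝ) * a + 0^2) = r := by
    rw [show r^2 + 2 * (0:ℝ) * a + 0^2 = r^2 by ring, Real.sqrt_sq hr.le]
  refine ⟨_, ((hq 0).continuousAt.eventually_ne h0).mono he, ?_⟩
  have hn : HasDerivAt (fun t : ℝ => a + t) 1 0 := (hasDerivAt_id (0:ℝ)).const_add a
  have hd := hn.div (hs 0 h0) (by rw [hs0]; exact hr.ne')
  have h := ((((hs 0 h0).const_mul (-k)).exp).mul (hd.const_mul (-k))).const_mul C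
  refine h.congr_deriv ?_
  simp only [Pi.div_apply, hs0]
  field_simp
  ring

lemma psi_line {f : EuclideanSpace ℝ (Fin 3) → ℝ} {x : EuclideanSpace ℝ (Fin 3)}
    (hf : ContDiffAt ℝ 2 f x) (e : EuclideanSpace ℝ (Fin 3)) :
    (∀ᶠ t in nhds (0:ℝ), HasDerivAt (fun t : ℝ => f (x + t • e)) (fderiv ℝ f (x + t • e) e) t) ∧
    HasDerivAt (fun t : ℝ => fderiv ℝ f (x + t • e) e)
      (fderiv ℝ (fun y => fderiv ℝ f y e) x e) 0 := by
  have hl : ∀ t : ℝ, HasDerivAt (fun t : ℝ => x + t • e) e t := fun t => by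
    simpa using ((hasDerivAt_id t).smul_const e).const_add x
  have hx : x + (0:ℝ) • e = x := by simp
  constructor
  · have h1 : ∀ᶠ y in nhds x, ContDiffAt ℝ 2 f y := hf.eventually (by simp)
    have h2 : Tendsto (fun t : ℝ => x + t • e) (nhds 0) (nhds x) := by
      have := (hl 0).continuousAt.tendsto
      rwa [hx] at this
    filter_upwards [h2.eventually h1] with t ht
    exact (ht.differentiableAt (by norm_num)).hasFDerivAt.comp_hasDerivAt t (hl t)
  · have h1 : ContDiffAt ℝ 1 (fderiv ℝ f) x := hf.fderiv_right (by norm_num)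
    have h2 : DifferentiableAt ℝ (fun y => fderiv ℝ f y e) x :=
      (h1.differentiableAt (by norm_num)).clm_apply (differentiableAt_const e)
    have h3 := h2.hasFDerivAt
    rw [← hx] at h3
    have h4 := h3.comp_hasDerivAt (0:ℝ) (hl 0)
    rw [hx] at h4
    exact h4

lemma lap_le {f : EuclideanSpace ℝ (Fin 3) → ℝ} {x : EuclideanSpace ℝ (Fin 3)} (k C : ℝ)
    (hx : 0 < ‖x‖) (hf : ContDiffAt ℝ 2 f x)
    (hmax : IsLocalMax (fun y => f y - C * Real.exp (-k * ‖y‖)) x) :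
    laplacian f x ≤ C * Real.exp (-k * ‖x‖) * (k^2 - 2 * k / ‖x‖) := by
  have key : ∀ i : Fin 3,
      fderiv ℝ (fun y => fderiv ℝ f y (EuclideanSpace.single i 1)) x (EuclideanSpace.single i 1)
      ≤ C * Real.exp (-k * ‖x‖) *
        (k^2 * (x i)^2 / ‖x‖^2 - k * (1 / ‖x‖ - (x i)^2 / ‖x‖^3)) := by
    intro i
    set e : EuclideanSpace ℝ (Fin 3) := EuclideanSpace.single i 1 with he
    obtain ⟨p1, p2⟩ := psi_line hf e
    obtain ⟨g', q1, q2⟩ := radial_second k C ‖x‖ (x i) hx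
    have hnorm : ∀ t : ℝ, ‖x + t • e‖ = Real.sqrt (‖x‖^2 + 2 * t * x i + t^2) := by
      intro t
      rw [← Real.sqrt_sq (norm_nonneg (x + t • e)), norm_add_sq_real, real_inner_smul_right,
        norm_smul]
      congr 1
      simp [he, EuclideanSpace.inner_single_right]
      ring
    have hm : IsLocalMax (fun t : ℝ => f (x + t • e) -
        C * Real.exp (-k * Real.sqrt (‖x‖^2 + 2 * t * x i + t^2))) 0 := by
      have hc : Tendsto (fun t : ℝ => x + t • e) (nhds 0) (nhds x) := by
        have : Continuous (fun t : ℝ => x + t • e) := by fun_prop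
        simpa using this.tendsto 0
      filter_upwards [hc.eventually hmax] with t ht
      rw [← hnorm, ← hnorm]
      simpa using ht
    have := second_deriv_test hm
      (f' := fun t => fderiv ℝ f (x + t • e) e - g' t)
      (by filter_upwards [p1, q1] with t a b using a.sub b) (p2.sub q2)
    linarith
  have hsum : ‖x‖^2 = (x 0)^2 + (x 1)^2 + (x 2)^2 := by
    rw [EuclideanSpace.real_norm_sq_eq, Fin.sum_univ_three]
  have h := add_le_add (add_le_add (key 0) (key 1)) (key 2)
  unfold laplacian
  rw [Fin.sum_univ_three]
  refine h.trans (le_of_eq ?_)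
  have : k^2 - 2 * k / ‖x‖ = k^2 * ((x 0)^2 + (x 1)^2 + (x 2)^2) / ‖x‖^2
      - k * (3 / ‖x‖ - ((x 0)^2 + (x 1)^2 + (x 2)^2) / ‖x‖^3) := by
    rw [← hsum]; field_simp; ring
  rw [this]; ring

/-- exponential upper bound.  If `ψ ≥ 0` is continuous on `ℝ³`, tends to `0`
at infinity, is `C²` on `{|x| > R}` and satisfies `Δψ ≥ A ψ` there (with `A > 0`), then
`ψ(x) ≤ C_A e^{-√A |x|}` for `|x| ≥ R`. -/
theorem exponential_upper_bound
    (R A : ℝ) (hR : 0 < R) (hA : 0 < A)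
    (ψ : EuclideanSpace ℝ (Fin 3) → ℝ)
    (hψ_cont : Continuous ψ) (hψ_nonneg : ∀ x, 0 ≤ ψ x)
    (hψ_decay : Tendsto ψ (cocompact (EuclideanSpace ℝ (Fin 3))) (nhds 0))
    (hψ_smooth : ContDiffOn ℝ 2 ψ {x | R < ‖x‖})
    (hψ_sub : ∀ x : EuclideanSpace ℝ (Fin 3), R < ‖x‖ → A * ψ x ≤ laplacian ψ x) :
    ∃ C : ℝ, 0 < C ∧ ∀ x : EuclideanSpace ℝ (Fin 3), R ≤ ‖x‖ →
      ψ x ≤ C * Real.exp (-Real.sqrt A * ‖x‖) := by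
  set k := Real.sqrt A with hk
  have hkpos : 0 < k := Real.sqrt_pos.2 hA
  have hkA : k^2 = A := Real.sq_sqrt hA.le
  obtain ⟨M, hM⟩ := (isCompact_sphere (0 : EuclideanSpace ℝ (Fin 3)) R).bddAbove_image
    hψ_cont.continuousOn
  have hM' : ∀ x : EuclideanSpace ℝ (Fin 3), ‖x‖ = R → ψ x ≤ |M| := fun x hx =>
    (hM ⟨x, by simpa using hx, rfl⟩).trans (le_abs_self M)
  set C := (|M| + 1) * Real.exp (k * R) with hC
  have hCpos : 0 < C := by positivity
  refine ⟨C, hCpos, ?_⟩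
  by_contra hcon
  push Not at hcon
  obtain ⟨x0, hx0, hlt⟩ := hcon
  set w : EuclideanSpace ℝ (Fin 3) → ℝ := fun y => ψ y - C * Real.exp (-k * ‖y‖) with hw
  have hwc : Continuous w := by fun_prop
  have hw0 : 0 < w x0 := sub_pos.2 hlt
  have hev : ∀ᶠ y in cocompact (EuclideanSpace ℝ (Fin 3)), w y ≤ w x0 := by
    filter_upwards [hψ_decay.eventually_lt_const hw0] with y hy
    have : 0 < C * Real.exp (-k * ‖y‖) := by positivity
    have h2 : w y = ψ y - C * Real.exp (-k * ‖y‖) := rfl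
    linarith
  have hcl : IsClosed {y : EuclideanSpace ℝ (Fin 3) | R ≤ ‖y‖} :=
    isClosed_le continuous_const continuous_norm
  obtain ⟨x1, hx1, hmax⟩ := hwc.continuousOn.exists_isMaxOn' hcl hx0
    (hev.filter_mono inf_le_left)
  have hw1 : 0 < w x1 := hw0.trans_le (hmax hx0)
  have hne : R < ‖x1‖ := by
    refine lt_of_le_of_ne hx1 fun h => ?_
    have h1 := hM' x1 h.symm
    have h2 : w x1 = ψ x1 - (|M| + 1) * Real.exp (k * R) * Real.exp (-k * ‖x1‖) := rfl
    rw [← h, mul_assoc, ← Real.exp_add, show k * R + -k * R = 0 by ring, Real.exp_zero] at h2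
    linarith
  have hop : IsOpen {y : EuclideanSpace ℝ (Fin 3) | R < ‖y‖} :=
    isOpen_lt continuous_const continuous_norm
  have hnh : {y : EuclideanSpace ℝ (Fin 3) | R < ‖y‖} ∈ nhds x1 := hop.mem_nhds hne
  have hloc : IsLocalMax w x1 := by
    filter_upwards [hnh] with y hy
    exact hmax (le_of_lt hy)
  have hpos : 0 < ‖x1‖ := hR.trans hne
  have h1 := lap_le k C hpos (hψ_smooth.contDiffAt hnh) hloc
  have h2 := hψ_sub x1 hne
  have h3 : 0 < C * Real.exp (-k * ‖x1‖) * (2 * k / ‖x1‖) := by positivity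
  have h4 : A * (C * Real.exp (-k * ‖x1‖)) < A * ψ x1 :=
    mul_lt_mul_of_pos_left (sub_pos.1 hw1) hA
  rw [hkA] at h1
  nlinarith
end

section
/- Let R > 0 and a ≥ 0. Let ψ : ℝ³ → ℝ be continuous with ψ(x) > 0 for |x| ≥ R and ψ(x) → 0 as |x| → ∞, twice continuously differentiable on the open set {x ∈ ℝ³ : |x| > R}, and satisfying Δψ(x) ≤ a ψ(x) for all |x| > R. Then for every A₂ > a there exist constants c > 0 and R' ≥ R such that ψ(x) ≥ c e^{-√{A₂} |x|} for all x with |x| ≥ R'. -/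
open MeasureTheory Filter Set

lemma aux_second_deriv_nonneg (g g' : ℝ → ℝ) (L : ℝ) (hmin : IsLocalMin g 0)
    (h1 : ∀ᶠ t in nhds (0:ℝ), HasDerivAt g (g' t) t) (h2 : HasDerivAt g' L 0) : 0 ≤ L := by
  by_contra hL
  push Not at hL
  have e1 : deriv g =ᶠ[nhds 0] g' := h1.mono fun t ht => ht.deriv
  have e2 : deriv (deriv g) 0 = L := by rw [e1.deriv_eq]; exact h2.deriv
  have hmax : IsLocalMax g 0 :=
    isLocalMax_of_deriv_deriv_neg (by rw [e2]; exact hL) hmin.deriv_eq_zero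
      h1.self_of_nhds.continuousAt
  have hc : g =ᶠ[nhds 0] fun _ => g 0 := by
    filter_upwards [hmin, hmax] with t ha hb
    exact le_antisymm hb ha
  have e3 : deriv g =ᶠ[nhds 0] fun _ => 0 := by
    have := hc.deriv
    simpa using this
  rw [e3.deriv_eq] at e2
  simp at e2
  linarith

lemma aux_exp_line (K s b : ℝ) (t : ℝ) (hq : 0 < s + 2 * t * b + t ^ 2) :
    HasDerivAt (fun t : ℝ => Real.exp (-K * √(s + 2 * t * b + t ^ 2)))
      (-K * ((b + t) / √(s + 2 * t * b + t ^ 2)) * Real.exp (-K * √(s + 2 * t * b + t ^ 2))) t := by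
  have h0 : HasDerivAt (fun t : ℝ => s + 2 * t * b + t ^ 2) (2 * b + 2 * t) t := by
    have := ((((hasDerivAt_id t).const_mul 2).mul_const b).const_add s).add ((hasDerivAt_id t).pow 2)
    refine HasDerivAt.congr_deriv this ?_
    simp
  have h1 := ((h0.sqrt hq.ne').const_mul (-K)).exp
  convert h1 using 1
  have : √(s + 2 * t * b + t ^ 2) ≠ 0 := (Real.sqrt_pos.2 hq).ne'
  field_simp

lemma aux_exp_line2 (K r b : ℝ) (hr : 0 < r) :
    HasDerivAt (fun t : ℝ => -K * ((b + t) / √(r ^ 2 + 2 * t * b + t ^ 2)) *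
        Real.exp (-K * √(r ^ 2 + 2 * t * b + t ^ 2)))
      ((K ^ 2 * b ^ 2 / r ^ 2 - K / r + K * b ^ 2 / r ^ 3) * Real.exp (-K * r)) 0 := by
  have hq : 0 < r ^ 2 + 2 * 0 * b + 0 ^ 2 := by simp; positivity
  have hs : √(r ^ 2 + 2 * 0 * b + 0 ^ 2) = r := by simp [hr.le]
  have h0 : HasDerivAt (fun t : ℝ => r ^ 2 + 2 * t * b + t ^ 2) (2 * b + 2 * 0) 0 := by
    have := ((((hasDerivAt_id (0:ℝ)).const_mul 2).mul_const b).const_add (r ^ 2)).add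
      ((hasDerivAt_id (0:ℝ)).pow 2)
    refine HasDerivAt.congr_deriv this ?_
    simp
  have h1 := h0.sqrt hq.ne'
  have h2 := (((hasDerivAt_id (0:ℝ)).const_add b).div h1 (by rw [hs]; exact hr.ne')).const_mul (-K)
  have h3 := h2.mul (aux_exp_line K (r ^ 2) b 0 hq)
  refine HasDerivAt.congr_deriv h3 ?_
  simp only [Pi.div_apply, id, hs]
  field_simp
  ring

lemma aux_norm_line (x : EuclideanSpace ℝ (Fin 3)) (i : Fin 3) (t : ℝ) :
    ‖x + t • EuclideanSpace.single i (1:ℝ)‖ = √(‖x‖ ^ 2 + 2 * t * x i + t ^ 2) := by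
  rw [← Real.sqrt_sq (norm_nonneg (x + t • EuclideanSpace.single i (1:ℝ))), norm_add_sq_real,
    inner_smul_right, EuclideanSpace.inner_single_right, norm_smul, PiLp.norm_single]
  congr 1
  simp
  ring

lemma aux_dir (R c K : ℝ) (hR : 0 < R)
    (ψ : EuclideanSpace ℝ (Fin 3) → ℝ)
    (hψ_smooth : ContDiffOn ℝ 2 ψ {x | R < ‖x‖}) (x : EuclideanSpace ℝ (Fin 3)) (hx : R < ‖x‖)
    (hmin : IsLocalMin (fun y => ψ y - c * Real.exp (-K * ‖y‖)) x) (i : Fin 3) :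
    c * ((K ^ 2 * (x i) ^ 2 / ‖x‖ ^ 2 - K / ‖x‖ + K * (x i) ^ 2 / ‖x‖ ^ 3) * Real.exp (-K * ‖x‖)) ≤
      fderiv ℝ (fun y => fderiv ℝ ψ y (EuclideanSpace.single i 1)) x (EuclideanSpace.single i 1) := by
  set e : EuclideanSpace ℝ (Fin 3) := EuclideanSpace.single i 1 with he
  have hopen : IsOpen {x : EuclideanSpace ℝ (Fin 3) | R < ‖x‖} :=
    isOpen_lt continuous_const continuous_norm
  have hline : ∀ t : ℝ, HasDerivAt (fun t : ℝ => x + t • e) e t := by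
    intro t
    simpa using ((hasDerivAt_id t).smul_const e).const_add x
  have hcl : ContinuousAt (fun t : ℝ => x + t • e) 0 := (hline 0).continuousAt
  have hl0 : x + (0:ℝ) • e = x := by simp
  have hev : ∀ᶠ t in nhds (0:ℝ), R < ‖x + t • e‖ := by
    refine hcl.eventually_mem (s := {x | R < ‖x‖}) ?_
    rw [hl0]; exact hopen.mem_nhds hx
  have hfd : DifferentiableAt ℝ (fun y => fderiv ℝ ψ y e) x := by
    have h1 : ContDiffAt ℝ 2 ψ x := hψ_smooth.contDiffAt (hopen.mem_nhds hx)
    have h2 : ContDiffAt ℝ 1 (fderiv ℝ ψ) x := h1.fderiv_right (by norm_num)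
    exact (h2.differentiableAt (by norm_num)).clm_apply (differentiableAt_const e)
  have hr : 0 < ‖x‖ := hR.trans hx
  have key := aux_second_deriv_nonneg
    (fun t => ψ (x + t • e) - c * Real.exp (-K * √(‖x‖ ^ 2 + 2 * t * x i + t ^ 2)))
    (fun t => fderiv ℝ ψ (x + t • e) e - c * (-K * ((x i + t) / √(‖x‖ ^ 2 + 2 * t * x i + t ^ 2)) *
        Real.exp (-K * √(‖x‖ ^ 2 + 2 * t * x i + t ^ 2))))
    (fderiv ℝ (fun y => fderiv ℝ ψ y e) x e -
      c * ((K ^ 2 * (x i) ^ 2 / ‖x‖ ^ 2 - K / ‖x‖ + K * (x i) ^ 2 / ‖x‖ ^ 3) * Real.exp (-K * ‖x‖)))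
    ?_ ?_ ?_
  · linarith
  · rw [← hl0] at hmin
    have := IsLocalMin.comp_continuous (g := fun t : ℝ => x + t • e) hmin hcl
    simpa only [Function.comp_def, he, aux_norm_line] using this
  · filter_upwards [hev] with t ht
    have hd : DifferentiableAt ℝ ψ (x + t • e) :=
      (hψ_smooth.contDiffAt (hopen.mem_nhds ht)).differentiableAt (by norm_num)
    have hq : 0 < ‖x‖ ^ 2 + 2 * t * x i + t ^ 2 := by
      have := hR.trans ht
      rw [he, aux_norm_line] at this
      exact Real.sqrt_pos.1 this
    exact (hd.hasFDerivAt.comp_hasDerivAt t (hline t)).sub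
      ((aux_exp_line K _ (x i) t hq).const_mul c)
  · have h1 : HasDerivAt (fun t : ℝ => fderiv ℝ ψ (x + t • e) e)
        (fderiv ℝ (fun y => fderiv ℝ ψ y e) x e) 0 := by
      have h := hfd.hasFDerivAt
      nth_rewrite 2 [← hl0] at h
      exact h.comp_hasDerivAt (0:ℝ) (hline 0)
    exact h1.sub ((aux_exp_line2 K ‖x‖ (x i) hr).const_mul c)

lemma aux_lap (R c K : ℝ) (hR : 0 < R)
    (ψ : EuclideanSpace ℝ (Fin 3) → ℝ)
    (hψ_smooth : ContDiffOn ℝ 2 ψ {x | R < ‖x‖}) (x : EuclideanSpace ℝ (Fin 3)) (hx : R < ‖x‖)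
    (hmin : IsLocalMin (fun y => ψ y - c * Real.exp (-K * ‖y‖)) x) :
    (K ^ 2 - 2 * K / ‖x‖) * (c * Real.exp (-K * ‖x‖)) ≤ laplacian ψ x := by
  have h := Finset.sum_le_sum (s := Finset.univ) fun i _ =>
    aux_dir R c K hR ψ hψ_smooth x hx hmin i
  refine le_trans (le_of_eq ?_) h
  have hr : 0 < ‖x‖ := hR.trans hx
  have hn : x 0 ^ 2 + x 1 ^ 2 + x 2 ^ 2 = ‖x‖ ^ 2 := by
    rw [EuclideanSpace.real_norm_sq_eq, Fin.sum_univ_three]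
  rw [Fin.sum_univ_three]
  have h2 : x 2 ^ 2 = ‖x‖ ^ 2 - x 0 ^ 2 - x 1 ^ 2 := by linarith
  rw [h2]
  field_simp
  ring

/-- exponential lower bound.  If `ψ` is continuous, positive for `|x| ≥ R`,
tends to `0` at infinity, is `C²` on `{|x| > R}` and satisfies `Δψ ≤ a ψ` there (with
`a ≥ 0`), then for every `A₂ > a` there are `c > 0` and `R' ≥ R` with
`ψ(x) ≥ c e^{-√A₂ |x|}` for `|x| ≥ R'`. -/
theorem exponential_lower_bound
    (R a : ℝ) (hR : 0 < R) (ha : 0 ≤ a)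
    (ψ : EuclideanSpace ℝ (Fin 3) → ℝ)
    (hψ_cont : Continuous ψ)
    (hψ_pos : ∀ x : EuclideanSpace ℝ (Fin 3), R ≤ ‖x‖ → 0 < ψ x)
    (hψ_decay : Tendsto ψ (cocompact (EuclideanSpace ℝ (Fin 3))) (nhds 0))
    (hψ_smooth : ContDiffOn ℝ 2 ψ {x | R < ‖x‖})
    (hψ_super : ∀ x : EuclideanSpace ℝ (Fin 3), R < ‖x‖ → laplacian ψ x ≤ a * ψ x) :
    ∀ A₂ : ℝ, a < A₂ →
      ∃ c R' : ℝ, 0 < c ∧ R ≤ R' ∧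
        ∀ x : EuclideanSpace ℝ (Fin 3), R' ≤ ‖x‖ →
          c * Real.exp (-Real.sqrt A₂ * ‖x‖) ≤ ψ x := by
  intro A hA
  have hA0 : 0 < A := ha.trans_lt hA
  set K := √A with hK
  have hKp : 0 < K := Real.sqrt_pos.2 hA0
  have hK2 : K ^ 2 = A := Real.sq_sqrt hA0.le
  set R' := R + 1 + 2 * K / (A - a) with hR'
  have hAa : 0 < A - a := by linarith
  have hfrac : 0 < 2 * K / (A - a) := by positivity
  have hRR : R < R' := by linarith
  have hR'0 : 0 < R' := hR.trans hRR
  obtain ⟨m, hm, hmψ⟩ : ∃ m : ℝ, 0 < m ∧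
      ∀ x ∈ Metric.sphere (0 : EuclideanSpace ℝ (Fin 3)) R', m ≤ ψ x := by
    obtain ⟨y, hy, hymin⟩ := (isCompact_sphere (0 : EuclideanSpace ℝ (Fin 3)) R').exists_isMinOn
      (NormedSpace.sphere_nonempty.2 hR'0.le) hψ_cont.continuousOn
    refine ⟨ψ y, hψ_pos y ?_, fun x hx => hymin hx⟩
    rw [mem_sphere_zero_iff_norm] at hy
    linarith
  set c := m * Real.exp (K * R') with hc
  have hcp : 0 < c := by positivity
  refine ⟨c, R', hcp, hRR.le, ?_⟩
  by_contra hcon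
  push Not at hcon
  obtain ⟨x0, hx0, hx0lt⟩ := hcon
  set u : EuclideanSpace ℝ (Fin 3) → ℝ := fun y => ψ y - c * Real.exp (-K * ‖y‖) with hu
  have hucont : Continuous u := by fun_prop
  have hu0 : u x0 < 0 := by simp only [hu]; linarith
  have hulim : Tendsto u (cocompact _) (nhds 0) := by
    have h1 : Tendsto (fun y : EuclideanSpace ℝ (Fin 3) => -K * ‖y‖) (cocompact _) atBot :=
      (tendsto_norm_cocompact_atTop).const_mul_atTop_of_neg (by linarith)
    simpa [hu] using hψ_decay.sub ((Real.tendsto_exp_atBot.comp h1).const_mul c)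
  have hclosed : IsClosed {x : EuclideanSpace ℝ (Fin 3) | R' ≤ ‖x‖} :=
    isClosed_le continuous_const continuous_norm
  obtain ⟨x1, hx1, hmin⟩ := hucont.continuousOn.exists_isMinOn' hclosed hx0
    (((hulim.eventually (lt_mem_nhds hu0)).mono fun y hy => le_of_lt hy).filter_mono inf_le_left)
  have hu1 : u x1 < 0 := (hmin hx0).trans_lt hu0
  have hx1' : R' < ‖x1‖ := by
    refine lt_of_le_of_ne hx1 fun heq => ?_
    have h1 := hmψ x1 (by rw [mem_sphere_zero_iff_norm]; exact heq.symm)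
    have h2 : c * Real.exp (-K * ‖x1‖) = m := by
      rw [← heq, hc, mul_assoc, ← Real.exp_add]; simp
    simp only [hu] at hu1
    linarith
  have hloc : IsLocalMin u x1 := hmin.isLocalMin
    (Filter.mem_of_superset ((isOpen_lt continuous_const continuous_norm).mem_nhds hx1')
      fun y (hy : R' < ‖y‖) => hy.le)
  have hx1R : R < ‖x1‖ := hRR.trans hx1'
  have hL := aux_lap R c K hR ψ hψ_smooth x1 hx1R hloc
  have hS := hψ_super x1 hx1R
  have hE : 0 < c * Real.exp (-K * ‖x1‖) := by positivity
  have hq : a < K ^ 2 - 2 * K / ‖x1‖ := by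
    have hr : 0 < ‖x1‖ := hR.trans hx1R
    have : 2 * K / ‖x1‖ < A - a := by
      rw [div_lt_comm₀ hr hAa]; linarith
    rw [hK2]; linarith
  have h3 : a * (c * Real.exp (-K * ‖x1‖)) < (K ^ 2 - 2 * K / ‖x1‖) * (c * Real.exp (-K * ‖x1‖)) :=
    mul_lt_mul_of_pos_right hq hE
  have h4 : a * ψ x1 ≤ a * (c * Real.exp (-K * ‖x1‖)) := by
    apply mul_le_mul_of_nonneg_left _ ha
    simp only [hu] at hu1
    linarith
  linarith
end

section
/- Let R > 0, A > 0 and C₀ > 0. Let u : ℝ³ → ℝ be continuous and nonnegative with u(x) → 0 as |x| → ∞, and let w : ℝ³ → [0, ∞) be continuous with w(x) ≤ C₀ e^{-√A |x|} for all x. Assume that u is twice continuously differentiable on the open set Ω = {x ∈ ℝ³ : |x| > R and u(x) > w(x)} and that Δu(x) ≥ A u(x) for all x ∈ Ω. Then there exists a constant C > 0 such that u(x) ≤ C e^{-√A |x|} for all x with |x| ≥ R. -/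
open MeasureTheory Filter Set

lemma second_le (f : EuclideanSpace ℝ (Fin 3) → ℝ) (x e : EuclideanSpace ℝ (Fin 3)) (hf : ContDiffAt ℝ 2 f x) (hm : IsLocalMax f x) :
    fderiv ℝ (fun y => fderiv ℝ f y e) x e ≤ 0 := by
  by_contra hpos
  push Not at hpos
  set p : ℝ → ℝ := fun t => f (x + t • e) with hp
  have hl : ∀ t : ℝ, HasDerivAt (fun t : ℝ => x + t • e) e t := fun t => by
    simpa using ((hasDerivAt_id t).smul_const e).const_add x
  have hx0 : x + (0:ℝ) • e = x := by simp
  have hc : Tendsto (fun t : ℝ => x + t • e) (nhds 0) (nhds x) := by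
    have := (hl 0).continuousAt.tendsto
    rwa [hx0] at this
  have hd : ∀ᶠ y in nhds x, DifferentiableAt ℝ f y := by
    filter_upwards [hf.eventually (by simp)] with y hy
    exact hy.differentiableAt (by norm_num)
  have h1 : deriv p =ᶠ[nhds 0] fun t => fderiv ℝ f (x + t • e) e := by
    filter_upwards [hc.eventually hd] with t ht
    exact (ht.hasFDerivAt.comp_hasDerivAt t (hl t)).deriv
  have hdd : DifferentiableAt ℝ (fun y => fderiv ℝ f y e) x := by
    have : ContDiffAt ℝ 1 (fderiv ℝ f) x := hf.fderiv_right (by norm_num)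
    exact (this.differentiableAt (by norm_num)).clm_apply (differentiableAt_const _)
  have h2 : deriv (deriv p) 0 = fderiv ℝ (fun y => fderiv ℝ f y e) x e := by
    rw [h1.deriv_eq]
    have h3 : HasFDerivAt (fun y => fderiv ℝ f y e) (fderiv ℝ (fun y => fderiv ℝ f y e) x)
      (x + (0:ℝ) • e) := by rw [hx0]; exact hdd.hasFDerivAt
    exact (h3.comp_hasDerivAt (0:ℝ) (hl 0)).deriv
  have hmax : IsLocalMax p 0 := by
    have := hc.eventually hm
    unfold IsLocalMax IsMaxFilter
    simpa [hp] using this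
  have hcp : ContinuousAt p 0 := by
    have : ContinuousAt f (x + (0:ℝ) • e) := by rw [hx0]; exact hf.continuousAt
    exact ContinuousAt.comp (f := fun t : ℝ => x + t • e) this (hl 0).continuousAt
  have hmin := isLocalMin_of_deriv_deriv_pos (h2 ▸ hpos) hmax.deriv_eq_zero hcp
  have hconst : p =ᶠ[nhds 0] fun _ => p 0 := by
    filter_upwards [hmin, hmax] with t h1 h2
    exact le_antisymm h2 h1
  have : deriv (deriv p) 0 = 0 := by
    rw [hconst.deriv.deriv_eq]; simp
  rw [h2] at this
  linarith

lemma norm_fd (y : EuclideanSpace ℝ (Fin 3)) (hy : y ≠ 0) :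
    HasFDerivAt (fun z : EuclideanSpace ℝ (Fin 3) => ‖z‖) ((‖y‖)⁻¹ • innerSL ℝ y) y := by
  have h := ((hasStrictFDerivAt_norm_sq y).hasFDerivAt).sqrt (by positivity)
  have h2 : (fun z : EuclideanSpace ℝ (Fin 3) => ‖z‖) = fun z => √(‖z‖^2) := by
    ext z; simp
  rw [h2]
  refine h.congr_fderiv ?_
  ext v
  simp
  field_simp

lemma g_fd (s C : ℝ) (y : EuclideanSpace ℝ (Fin 3)) (hy : y ≠ 0) :
    HasFDerivAt (fun z : EuclideanSpace ℝ (Fin 3) => C * Real.exp (-s * ‖z‖))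
      ((C * Real.exp (-s * ‖y‖) * (-s) * (‖y‖)⁻¹) • innerSL ℝ y) y := by
  refine ((((norm_fd y hy).const_mul (-s)).exp).const_mul C).congr_fderiv ?_
  ext v
  simp
  ring

lemma g_second (s C : ℝ) (x e : EuclideanSpace ℝ (Fin 3)) (hx : x ≠ 0) :
    fderiv ℝ (fun y => fderiv ℝ (fun z : EuclideanSpace ℝ (Fin 3) => C * Real.exp (-s * ‖z‖)) y e) x e
      = C * Real.exp (-s * ‖x‖) * ((s^2 / ‖x‖^2 + s / ‖x‖^3) * (inner ℝ x e)^2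
          - s / ‖x‖ * inner ℝ e e) := by
  have h1 : (fun y => fderiv ℝ (fun z : EuclideanSpace ℝ (Fin 3) => C * Real.exp (-s * ‖z‖)) y e) =ᶠ[nhds x]
      fun y => (C * Real.exp (-s * ‖y‖)) * ((-s) * (‖y‖)⁻¹ * inner ℝ e y) := by
    filter_upwards [isOpen_ne.mem_nhds hx] with y hy
    rw [(g_fd s C y hy).fderiv]
    simp [real_inner_comm]
    ring
  rw [h1.fderiv_eq]
  have hn : ‖x‖ ≠ 0 := by simpa using hx
  have hinv : HasFDerivAt (fun z : EuclideanSpace ℝ (Fin 3) => (‖z‖)⁻¹) _ x :=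
    (hasDerivAt_inv hn).comp_hasFDerivAt x (norm_fd x hx)
  have h2 := (g_fd s C x hx).mul ((hinv.const_mul (-s)).mul (innerSL ℝ e).hasFDerivAt)
  have h3 := h2.fderiv
  simp only [Pi.mul_def, innerSL_apply_apply] at h3
  rw [h3]
  simp [real_inner_comm]
  field_simp
  ring

lemma g_lap (s C : ℝ) (x : EuclideanSpace ℝ (Fin 3)) (hx : x ≠ 0) :
    laplacian (fun z : EuclideanSpace ℝ (Fin 3) => C * Real.exp (-s * ‖z‖)) x
      = C * Real.exp (-s * ‖x‖) * (s^2 - 2 * s / ‖x‖) := by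
  have hn : ‖x‖ ≠ 0 := by simpa using hx
  have hsq : ‖x‖^2 = x 0 ^ 2 + x 1 ^ 2 + x 2 ^ 2 := by
    rw [EuclideanSpace.norm_sq_eq]; simp [Fin.sum_univ_three]
  unfold laplacian
  simp only [g_second s C x _ hx, Fin.sum_univ_three]
  simp [EuclideanSpace.inner_single_right]
  have : x 2 ^ 2 = ‖x‖^2 - x 0 ^ 2 - x 1 ^ 2 := by rw [hsq]; ring
  rw [this]
  field_simp
  ring

/-- exponential decay with comparison only on the set `{u > w}`.  If `u ≥ 0`
is continuous and tends to `0` at infinity, `w ≥ 0` is continuous with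
`w(x) ≤ C₀ e^{-√A |x|}`, and `u` is `C²` with `Δu ≥ A u` on
`Ω = {x : |x| > R, u(x) > w(x)}`, then `u(x) ≤ C e^{-√A |x|}` for `|x| ≥ R`. -/
theorem exponential_decay_on_exceedance_set
    (R A C₀ : ℝ) (hR : 0 < R) (hA : 0 < A) (hC₀ : 0 < C₀)
    (u w : EuclideanSpace ℝ (Fin 3) → ℝ)
    (hu_cont : Continuous u) (hu_nonneg : ∀ x, 0 ≤ u x)
    (hu_decay : Tendsto u (cocompact (EuclideanSpace ℝ (Fin 3))) (nhds 0))
    (hw_cont : Continuous w) (hw_nonneg : ∀ x, 0 ≤ w x)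
    (hw_bound : ∀ x : EuclideanSpace ℝ (Fin 3), w x ≤ C₀ * Real.exp (-Real.sqrt A * ‖x‖))
    (hu_smooth : ContDiffOn ℝ 2 u {x | R < ‖x‖ ∧ w x < u x})
    (hu_sub : ∀ x : EuclideanSpace ℝ (Fin 3), R < ‖x‖ → w x < u x →
      A * u x ≤ laplacian u x) :
    ∃ C : ℝ, 0 < C ∧ ∀ x : EuclideanSpace ℝ (Fin 3), R ≤ ‖x‖ →
      u x ≤ C * Real.exp (-Real.sqrt A * ‖x‖) := by
  set s := Real.sqrt A with hs
  have hspos : 0 < s := Real.sqrt_pos.2 hA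
  have hs2 : s^2 = A := Real.sq_sqrt hA.le
  obtain ⟨M, hM⟩ := (isCompact_sphere (0 : EuclideanSpace ℝ (Fin 3)) R).bddAbove_image hu_cont.continuousOn
  have hM' : ∀ x : EuclideanSpace ℝ (Fin 3), ‖x‖ = R → u x ≤ M := fun x hx => hM ⟨x, by simpa using hx, rfl⟩
  set C := max C₀ (M * Real.exp (s * R)) with hC
  have hCpos : 0 < C := lt_of_lt_of_le hC₀ (le_max_left _ _)
  refine ⟨C, hCpos, ?_⟩
  set g : EuclideanSpace ℝ (Fin 3) → ℝ := fun z => C * Real.exp (-s * ‖z‖) with hg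
  have hgpos : ∀ x, 0 < g x := fun x => by positivity
  have hgc : Continuous g := by fun_prop
  by_contra! hcon
  obtain ⟨x₁, hx₁R, hx₁⟩ := hcon
  have hx₁' : 0 < u x₁ - g x₁ := sub_pos.2 hx₁
  have hcl : IsClosed {x : EuclideanSpace ℝ (Fin 3) | R ≤ ‖x‖} := isClosed_le continuous_const continuous_norm
  obtain ⟨x₀, hx₀R, hmax⟩ := ContinuousOn.exists_isMaxOn' (f := fun x => u x - g x)
    (hu_cont.sub hgc).continuousOn hcl hx₁R (by
      refine Filter.Eventually.filter_mono inf_le_left ?_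
      filter_upwards [hu_decay.eventually (gt_mem_nhds hx₁')] with x hx
      have := hgpos x
      linarith)
  have hpos : 0 < u x₀ - g x₀ := lt_of_lt_of_le hx₁' (hmax hx₁R)
  have hR₀ : R < ‖x₀‖ := by
    refine lt_of_le_of_ne hx₀R fun h => ?_
    have h1 := hM' x₀ h.symm
    have h2 : M ≤ g x₀ := by
      have : M * Real.exp (s * R) * Real.exp (-s * R) ≤ C * Real.exp (-s * R) := by
        gcongr; exact le_max_right _ _
      rw [mul_assoc, ← Real.exp_add] at this
      simp only [hg, ← h]
      simpa using this
    linarith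
  have hw₀ : w x₀ < u x₀ := by
    have h1 : C₀ * Real.exp (-s * ‖x₀‖) ≤ g x₀ := by
      simp only [hg]; gcongr; exact le_max_left _ _
    linarith [hw_bound x₀]
  have hx₀ : x₀ ≠ 0 := by
    rintro rfl; simp at hR₀; linarith
  have hopen : IsOpen {x : EuclideanSpace ℝ (Fin 3) | R < ‖x‖ ∧ w x < u x} :=
    (isOpen_lt continuous_const continuous_norm).inter (isOpen_lt hw_cont hu_cont)
  have hu2 : ContDiffAt ℝ 2 u x₀ := hu_smooth.contDiffAt (hopen.mem_nhds ⟨hR₀, hw₀⟩)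
  have hg2 : ContDiffAt ℝ 2 g x₀ :=
    contDiffAt_const.mul ((contDiffAt_const.mul (contDiffAt_norm ℝ hx₀)).exp)
  have hloc : IsLocalMax (fun x => u x - g x) x₀ :=
    hmax.isLocalMax (mem_of_superset
      ((isOpen_lt continuous_const continuous_norm).mem_nhds hR₀) fun y hy => (show R ≤ ‖y‖ from le_of_lt hy))
  have key : ∀ e : EuclideanSpace ℝ (Fin 3), fderiv ℝ (fun y => fderiv ℝ u y e) x₀ e
      ≤ fderiv ℝ (fun y => fderiv ℝ g y e) x₀ e := by
    intro e
    have h := second_le _ x₀ e (hu2.sub hg2) hloc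
    have hdd : ∀ f : EuclideanSpace ℝ (Fin 3) → ℝ, ContDiffAt ℝ 2 f x₀ →
        DifferentiableAt ℝ (fun y => fderiv ℝ f y e) x₀ := fun f hf => by
      have : ContDiffAt ℝ 1 (fderiv ℝ f) x₀ := hf.fderiv_right (by norm_num)
      exact (this.differentiableAt (by norm_num)).clm_apply (differentiableAt_const _)
    have heq : (fun y => fderiv ℝ (fun x => u x - g x) y e) =ᶠ[nhds x₀]
        fun y => fderiv ℝ u y e - fderiv ℝ g y e := by
      filter_upwards [hu2.eventually (by simp), hg2.eventually (by simp)] with y h1 h2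
      rw [fderiv_fun_sub (h1.differentiableAt (by norm_num)) (h2.differentiableAt (by norm_num))]
      rfl
    rw [heq.fderiv_eq, fderiv_fun_sub (hdd u hu2) (hdd g hg2)] at h
    simpa using h
  have hlap : laplacian u x₀ ≤ laplacian g x₀ := Finset.sum_le_sum fun i _ => key _
  rw [g_lap s C x₀ hx₀, hs2] at hlap
  have h1 := hu_sub x₀ hR₀ hw₀
  have h2 : 0 < 2 * s / ‖x₀‖ := by have := hR.trans hR₀; positivity
  have h3 : C * Real.exp (-s * ‖x₀‖) = g x₀ := rfl
  rw [h3] at hlap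
  nlinarith [hgpos x₀, mul_pos (hgpos x₀) h2, mul_pos hA hpos]
end

section
/- Let 0 < α₁ ≤ α₂ and C > 0. Let g : ℂ → ℂ be twice continuously differentiable as a map of real Banach spaces (identifying ℂ with ℝ²), with g(0) = 0, Dg(0) = 0, and ‖D²g(z)‖ ≤ C(|z|^{α₁} + |z|^{α₂}) for all z ∈ ℂ, where D and D² denote the first and second real Fréchet derivatives. Then there exists a constant C' > 0, depending only on C, α₁ and α₂, such that for all ψ, u₁, u₂ ∈ ℂ: |g(ψ + u₁) − g(ψ + u₂) − Dg(ψ)(u₁ − u₂)| ≤ C' [ (|ψ|^{α₁} + |ψ|^{α₂})(|u₁| + |u₂|) + |u₁|^{1+α₁} + |u₂|^{1+α₁} + |u₁|^{1+α₂} + |u₂|^{1+α₂} ] · |u₁ − u₂|. -/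
open Complex

lemma qre_rpow_aux {a b α β : ℝ} (ha : 0 ≤ a) (hb : 0 ≤ b) (hα : 0 ≤ α) (h : α ≤ β) :
    (a + b) ^ α ≤ 2 ^ β * (a ^ α + b ^ α) := by
  have h1 : (a + b) ^ α ≤ (2 * max a b) ^ α := by
    apply Real.rpow_le_rpow (by positivity) _ hα
    linarith [le_max_left a b, le_max_right a b]
  have h2 : (2 * max a b) ^ α = 2 ^ α * (max a b) ^ α :=
    Real.mul_rpow (by norm_num) (le_max_of_le_left ha)
  have h3 : (max a b) ^ α ≤ a ^ α + b ^ α := by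
    have := Real.rpow_nonneg ha α
    have := Real.rpow_nonneg hb α
    rcases max_cases a b with h | h <;> rw [h.1] <;> linarith
  have h4 : (2:ℝ) ^ α ≤ 2 ^ β := Real.rpow_le_rpow_of_exponent_le (by norm_num) h
  rw [h2] at h1
  refine h1.trans ?_
  have := Real.rpow_nonneg (le_max_of_le_left ha : 0 ≤ max a b) α
  gcongr

/-- pointwise estimate on the quadratic remainder
`F₂(ψ,u) = g(ψ+u) − g(ψ) − Dg(ψ)u` for a `C²` map `g : ℂ → ℂ` (as a map of real
Banach spaces) with `g(0)=0`, `Dg(0)=0` and `‖D²g(z)‖ ≤ C(|z|^{α₁}+|z|^{α₂})`. -/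
theorem quadratic_remainder_estimate
    (α₁ α₂ C : ℝ) (hα₁ : 0 < α₁) (hα : α₁ ≤ α₂) (hC : 0 < C) :
    ∃ C' : ℝ, 0 < C' ∧
      ∀ g : ℂ → ℂ, ContDiff ℝ 2 g → g 0 = 0 → fderiv ℝ g 0 = 0 →
        (∀ z : ℂ, ‖iteratedFDeriv ℝ 2 g z‖ ≤ C * (‖z‖ ^ α₁ + ‖z‖ ^ α₂)) →
        ∀ ψ u₁ u₂ : ℂ,
          ‖g (ψ + u₁) - g (ψ + u₂) - fderiv ℝ g ψ (u₁ - u₂)‖ ≤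
            C' * ((‖ψ‖ ^ α₁ + ‖ψ‖ ^ α₂) * (‖u₁‖ + ‖u₂‖)
              + ‖u₁‖ ^ (1 + α₁) + ‖u₂‖ ^ (1 + α₁)
              + ‖u₁‖ ^ (1 + α₂) + ‖u₂‖ ^ (1 + α₂)) * ‖u₁ - u₂‖ := by
  refine ⟨C * 2 ^ α₂, by positivity, ?_⟩
  intro g hg _ _ hD ψ u₁ u₂
  set r := max ‖u₁‖ ‖u₂‖ with hr
  have hr0 : 0 ≤ r := le_max_of_le_left (norm_nonneg _)
  have hα₂ : 0 < α₂ := hα₁.trans_le hα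
  set M := C * ((‖ψ‖ + r) ^ α₁ + (‖ψ‖ + r) ^ α₂) with hM
  have hdg : Differentiable ℝ g := hg.differentiable (by norm_num)
  have hdf : Differentiable ℝ (fderiv ℝ g) :=
    (hg.fderiv_right (m := 1) (by norm_num)).differentiable (by norm_num)
  have hconv : Convex ℝ (Metric.closedBall ψ r) := convex_closedBall ψ r
  have hψ : ψ ∈ Metric.closedBall ψ r := Metric.mem_closedBall_self hr0
  have hM0 : 0 ≤ M := by positivity
  have hb : ∀ z ∈ Metric.closedBall ψ r, ‖fderiv ℝ (fderiv ℝ g) z‖ ≤ M := by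
    intro z hz
    have e : ‖fderiv ℝ (fderiv ℝ g) z‖ = ‖iteratedFDeriv ℝ 2 g z‖ := by
      rw [← norm_iteratedFDeriv_one, norm_iteratedFDeriv_fderiv]
    have hz' : ‖z‖ ≤ ‖ψ‖ + r := by
      rw [mem_closedBall_iff_norm] at hz
      have := norm_add_le ψ (z - ψ)
      rw [add_sub_cancel] at this
      linarith
    rw [e]
    refine (hD z).trans ?_
    rw [hM]
    gcongr
  have hb1 : ∀ z ∈ Metric.closedBall ψ r, ‖fderiv ℝ g z - fderiv ℝ g ψ‖ ≤ M * r := by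
    intro z hz
    refine (hconv.norm_image_sub_le_of_norm_fderiv_le (fun x _ => hdf x) hb hψ hz).trans ?_
    rw [mem_closedBall_iff_norm] at hz
    gcongr
  have hm1 : ψ + u₁ ∈ Metric.closedBall ψ r := by
    simp [mem_closedBall_iff_norm, hr]
  have hm2 : ψ + u₂ ∈ Metric.closedBall ψ r := by
    simp [mem_closedBall_iff_norm, hr]
  have key := hconv.norm_image_sub_le_of_norm_fderiv_le' (fun x _ => hdg x) hb1 hm2 hm1
  rw [add_sub_add_left_eq_sub] at key
  refine key.trans (mul_le_mul_of_nonneg_right ?_ (norm_nonneg _))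
  have e1 := qre_rpow_aux (norm_nonneg ψ) hr0 hα₁.le hα
  have e2 := qre_rpow_aux (norm_nonneg ψ) hr0 hα₂.le le_rfl
  have hp : ∀ α : ℝ, 0 < α → r ^ α * r ≤ ‖u₁‖ ^ (1 + α) + ‖u₂‖ ^ (1 + α) := by
    intro α h
    have : r ^ α * r = r ^ (1 + α) := by
      rw [Real.rpow_add_of_nonneg hr0 zero_le_one h.le, Real.rpow_one, mul_comm]
    rw [this]
    have := Real.rpow_nonneg (norm_nonneg u₁) (1 + α)
    have := Real.rpow_nonneg (norm_nonneg u₂) (1 + α)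
    rcases max_cases ‖u₁‖ ‖u₂‖ with h | h <;> rw [hr, h.1] <;> linarith
  have hrs : r ≤ ‖u₁‖ + ‖u₂‖ :=
    max_le (by linarith [norm_nonneg u₂]) (by linarith [norm_nonneg u₁])
  calc M * r ≤ C * (2 ^ α₂ * (‖ψ‖ ^ α₁ + r ^ α₁) + 2 ^ α₂ * (‖ψ‖ ^ α₂ + r ^ α₂)) * r := by
        rw [hM]; gcongr
    _ = C * 2 ^ α₂ * ((‖ψ‖ ^ α₁ + ‖ψ‖ ^ α₂) * r + r ^ α₁ * r + r ^ α₂ * r) := by ring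
    _ ≤ C * 2 ^ α₂ * ((‖ψ‖ ^ α₁ + ‖ψ‖ ^ α₂) * (‖u₁‖ + ‖u₂‖)
          + (‖u₁‖ ^ (1 + α₁) + ‖u₂‖ ^ (1 + α₁)) + (‖u₁‖ ^ (1 + α₂) + ‖u₂‖ ^ (1 + α₂))) := by
        gcongr
        · exact hp _ hα₁
        · exact hp _ hα₂
    _ = _ := by ring
end

section
/- Let 0 < a < 1. Then sup_{t ≥ 0} [ (1 + t)^{a} / log(2 + t) ] ∫₀ᵗ (t − s)^{-a} (1 + s)^{-1} ds < ∞. (The integrand has an integrable singularity at s = t since a < 1, so the integral is finite for each t.) -/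
open MeasureTheory

/-- For `0 < a < 1`,
`sup_{t ≥ 0} (1 + t)^a / log(2 + t) · ∫₀ᵗ (t − s)^{-a} (1 + s)^{-1} ds < ∞`. -/
theorem sup_weighted_singular_integral_critical
    (a : ℝ) (ha0 : 0 < a) (ha1 : a < 1) :
    ∃ M : ℝ, ∀ t : ℝ, 0 ≤ t →
      (1 + t) ^ a / Real.log (2 + t) *
        ∫ s in (0 : ℝ)..t, (t - s) ^ (-a) * (1 + s) ^ (-(1 : ℝ)) ≤ M := by
  refine ⟨2 + 2 / ((1 - a) * Real.log 2), fun t ht => ?_⟩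
  have hT : 0 < 1 + t := by linarith
  have hl2 : 0 < Real.log 2 := Real.log_pos (by norm_num)
  have hl2t : Real.log 2 ≤ Real.log (2 + t) := Real.log_le_log (by norm_num) (by linarith)
  have hlt : 0 < Real.log (2 + t) := by linarith
  have h1a : 0 < 1 - a := by linarith
  have i1 : IntervalIntegrable (fun s : ℝ => (t - s) ^ (-a)) volume 0 t := by
    have h := (intervalIntegral.intervalIntegrable_rpow' (a := 0) (b := t)
      (r := -a) (by linarith)).comp_sub_left t
    simpa using h.symm
  have c2 : ContinuousOn (fun s : ℝ => (1 + s) ^ (-(1:ℝ))) (Set.uIcc 0 t) := by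
    rw [Set.uIcc_of_le ht]
    refine ContinuousOn.rpow_const (by fun_prop) ?_
    intro s hs
    left
    have := hs.1
    linarith
  have i2 : IntervalIntegrable (fun s : ℝ => (1 + s) ^ (-(1:ℝ))) volume 0 t :=
    c2.intervalIntegrable
  have v1 : ∫ s in (0 : ℝ)..t, (t - s) ^ (-a) = t ^ (1 - a) / (1 - a) := by
    rw [intervalIntegral.integral_comp_sub_left (fun x : ℝ => x ^ (-a)) t]
    rw [integral_rpow (Or.inl (by linarith))]
    rw [sub_self, sub_zero, show -a + 1 = 1 - a by ring, Real.zero_rpow h1a.ne', sub_zero]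
  have v2 : ∫ s in (0 : ℝ)..t, (1 + s) ^ (-(1:ℝ)) = Real.log (1 + t) := by
    rw [intervalIntegral.integral_comp_add_left (fun x : ℝ => x ^ (-(1:ℝ))) 1]
    simp only [Real.rpow_neg_one]
    rw [integral_inv_of_pos (by norm_num) hT]
    simp
  have key : ∫ s in (0 : ℝ)..t, (t - s) ^ (-a) * (1 + s) ^ (-(1 : ℝ)) ≤
      ∫ s in (0 : ℝ)..t, (2 * (1 + t) ^ (-a) * (1 + s) ^ (-(1 : ℝ))
        + 2 * (1 + t)⁻¹ * (t - s) ^ (-a)) := by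
    refine intervalIntegral.integral_mono_on ht (i1.mul_continuousOn c2)
      ((i2.const_mul _).add (i1.const_mul _)) ?_
    intro s hs
    have hs0 := hs.1
    have hs1 := hs.2
    have hv : 0 < 1 + s := by linarith
    have p1 : 0 ≤ (t - s) ^ (-a) := Real.rpow_nonneg (by linarith) _
    have p2 : 0 ≤ (1 + s) ^ (-(1:ℝ)) := Real.rpow_nonneg hv.le _
    have p3 : 0 ≤ (1 + t) ^ (-a) := Real.rpow_nonneg hT.le _
    have p4 : 0 ≤ (1 + t)⁻¹ := by positivity
    rcases le_total ((1 + t) / 2) (t - s) with h | h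
    · have q : (t - s) ^ (-a) ≤ 2 * (1 + t) ^ (-a) := by
        calc (t - s) ^ (-a) ≤ ((1 + t) / 2) ^ (-a) :=
              Real.rpow_le_rpow_of_nonpos (by positivity) h (by linarith)
          _ = 2 ^ a * (1 + t) ^ (-a) := by
              rw [Real.div_rpow hT.le (by norm_num), Real.rpow_neg (by norm_num : (0:ℝ) ≤ 2)]
              field_simp
          _ ≤ 2 * (1 + t) ^ (-a) := by
              gcongr
              calc (2:ℝ) ^ a ≤ 2 ^ (1:ℝ) :=
                    Real.rpow_le_rpow_of_exponent_le (by norm_num) ha1.le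
                _ = 2 := by simp
      have := mul_le_mul_of_nonneg_right q p2
      have : 0 ≤ 2 * (1 + t)⁻¹ * (t - s) ^ (-a) := by positivity
      linarith
    · have q : (1 + s) ^ (-(1:ℝ)) ≤ 2 * (1 + t)⁻¹ := by
        rw [Real.rpow_neg_one, inv_le_comm₀ hv (by positivity), mul_inv, inv_inv]
        linarith
      have := mul_le_mul_of_nonneg_left q p1
      have : 0 ≤ 2 * (1 + t) ^ (-a) * (1 + s) ^ (-(1 : ℝ)) := by positivity
      linarith
  rw [intervalIntegral.integral_add (i2.const_mul _) (i1.const_mul _),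
    intervalIntegral.integral_const_mul, intervalIntegral.integral_const_mul, v1, v2] at key
  have hTa : 0 < (1 + t) ^ a := Real.rpow_pos_of_pos hT _
  have e1 : (1 + t) ^ a * (1 + t) ^ (-a) = 1 := by
    rw [← Real.rpow_add hT]; simp
  have e2 : (1 + t) ^ a * ((1 + t)⁻¹ * t ^ (1 - a)) ≤ 1 := by
    calc (1 + t) ^ a * ((1 + t)⁻¹ * t ^ (1 - a))
        ≤ (1 + t) ^ a * ((1 + t)⁻¹ * (1 + t) ^ (1 - a)) := by
          gcongr
          linarith
      _ = 1 := by
          rw [← Real.rpow_neg_one, ← Real.rpow_add hT, ← Real.rpow_add hT]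
          ring_nf
          simp
  have hlog : Real.log (1 + t) ≤ Real.log (2 + t) := Real.log_le_log hT (by linarith)
  rw [div_mul_eq_mul_div, div_le_iff₀ hlt]
  have k2 := mul_le_mul_of_nonneg_left key hTa.le
  have e3 : (1 + t) ^ a * (2 * (1 + t) ^ (-a) * Real.log (1 + t)
      + 2 * (1 + t)⁻¹ * (t ^ (1 - a) / (1 - a)))
      = 2 * ((1 + t) ^ a * (1 + t) ^ (-a)) * Real.log (1 + t)
        + 2 / (1 - a) * ((1 + t) ^ a * ((1 + t)⁻¹ * t ^ (1 - a))) := by ring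
  rw [e3, e1] at k2
  have e4 : 2 / (1 - a) * ((1 + t) ^ a * ((1 + t)⁻¹ * t ^ (1 - a))) ≤ 2 / (1 - a) * 1 :=
    mul_le_mul_of_nonneg_left e2 (by positivity)
  have e5 : 2 / (1 - a) * 1 ≤ 2 / ((1 - a) * Real.log 2) * Real.log (2 + t) := by
    calc 2 / (1 - a) * 1 = 2 / ((1 - a) * Real.log 2) * Real.log 2 := by field_simp
      _ ≤ _ := by gcongr
  rw [add_mul]
  linarith
end
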